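/- Let φ(x,t) = t^p + a(x) t^q with 1 < p < q < ∞ and a a nonnegative function in C^{0,α}(ℝⁿ) for some α ∈ (0,1]. For a compact set E ⊆ ℝⁿ the following are equivalent: (a) there exist c_fat > 0 and 0 < r_o ≤ 1 such that for every z ∈ E and 0 < r < r_o, cap^inf_{φ̃_{z,r}}({x ∈ B̄(0,1/2) : z + r x ∈ E}; B(0,1)) ≥ c_fat, where φ̃_{z,r}(x,t) = φ(z + r x, t); (b) there exist c̃_fat > 0 and 0 < r̃_o ≤ 1 such that for every z ∈ E and 0 < r < r̃_o, cap_φ^inf(E ∩ B̄(z, r/2); B(z,r)) ≥ c̃_fat · cap_φ^inf(B̄(z, r/2); B(z,r)). -/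

import Mathlib

open MeasureTheory Metric Set

noncomputable section

/-- Euclidean space `ℝⁿ`. -/
abbrev En (n : ℕ) : Type := EuclideanSpace ℝ (Fin n)

/-- Norm of the (a.e. defined, by Rademacher's theorem) gradient of `u` at `x`. -/
def gnorm {n : ℕ} (u : En n → ℝ) (x : En n) : ℝ := ‖fderiv ℝ u x‖

/-- Admissible test functions for the level-`t` capacity of `E` in `O`:
Lipschitz on the closure of `O`, `u ≥ t` on `E`, `u = 0` on `∂O`. -/
def Adm {n : ℕ} (E O : Set (En n)) (t : ℝ) : Set (En n → ℝ) :=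
  {u | (∃ K, LipschitzOnWith K u (closure O)) ∧ (∀ x ∈ E, t ≤ u x) ∧
    ∀ x ∈ frontier O, u x = 0}

/-- Level-`t` variational capacity with integrand `ψ` and normalization `ψm`. -/
def capLevel {n : ℕ} (ψ : En n → ℝ → ℝ) (ψm : ℝ → ℝ)
    (E O : Set (En n)) (t : ℝ) : ℝ :=
  sInf ((fun u => ∫ x in O, ψ x (gnorm u x) / ψm t) '' Adm E O t)

/-- Infimal capacity with integrand `ψ` and normalization `ψm`. -/
def capInfGen {n : ℕ} (ψ : En n → ℝ → ℝ) (ψm : ℝ → ℝ) (E O : Set (En n)) : ℝ :=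
  ⨅ t : Ioi (0 : ℝ), capLevel ψ ψm E O (t : ℝ)

/-- The double-phase integrand `φ(x,t) = t^p + a(x) t^q`. -/
def phi {n : ℕ} (a : En n → ℝ) (p q : ℝ) (x : En n) (t : ℝ) : ℝ :=
  t ^ p + a x * t ^ q

/-- `a_O^- = inf_{x ∈ O} a(x)`. -/
def aInfOn {n : ℕ} (a : En n → ℝ) (O : Set (En n)) : ℝ := sInf (a '' O)

/-- `a_O^+ = sup_{x ∈ O} a(x)`. -/
def aSupOn {n : ℕ} (a : En n → ℝ) (O : Set (En n)) : ℝ := sSup (a '' O)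

/-- `φ_O^-(t) = t^p + a_O^- t^q`. -/
def phiMinus {n : ℕ} (a : En n → ℝ) (p q : ℝ) (O : Set (En n)) (t : ℝ) : ℝ :=
  t ^ p + aInfOn a O * t ^ q

/-- Level-`t` variational capacity for the double-phase integrand. -/
def capPhiLevel {n : ℕ} (a : En n → ℝ) (p q t : ℝ) (E O : Set (En n)) : ℝ :=
  capLevel (phi a p q) (phiMinus a p q O) E O t

/-- Infimal `φ`-capacity. -/
def capPhiInf {n : ℕ} (a : En n → ℝ) (p q : ℝ) (E O : Set (En n)) : ℝ :=
  ⨅ t : Ioi (0 : ℝ), capPhiLevel a p q (t : ℝ) E O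

/-- Variational `p`-capacity. -/
def capP {n : ℕ} (p : ℝ) (E O : Set (En n)) : ℝ :=
  sInf ((fun u => ∫ x in O, gnorm u x ^ p) '' Adm E O 1)

/-- The rescaled set `{x ∈ B̄(0,1/2) : z + r x ∈ E}`. -/
def shiftedSet {n : ℕ} (E : Set (En n)) (z : En n) (r : ℝ) : Set (En n) :=
  {x ∈ closedBall (0 : En n) (1 / 2) | z + r • x ∈ E}

/-- Local uniform infimal `φ`-fatness with parameters `cfat` and `ro`. -/
def LocUnifPhiFat {n : ℕ} (a : En n → ℝ) (p q : ℝ) (E : Set (En n))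
    (cfat ro : ℝ) : Prop :=
  ∀ z ∈ E, ∀ r : ℝ, 0 < r → r < ro →
    cfat ≤ capPhiInf (fun x => a (z + r • x)) p q (shiftedSet E z r) (ball (0 : En n) 1)

/-- Local uniform `p`-fatness with parameters `cfat` and `ro`. -/
def LocUnifPFat {n : ℕ} (p : ℝ) (E : Set (En n)) (cfat ro : ℝ) : Prop :=
  ∀ z ∈ E, ∀ r : ℝ, 0 < r → r < ro →
    cfat ≤ capP p (shiftedSet E z r) (ball (0 : En n) 1)

/-- `Lip_0(Ω)`: Lipschitz functions with compact support contained in `Ω`,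
extended by zero to `ℝⁿ`. -/
def Lip0 {n : ℕ} (Ω : Set (En n)) : Set (En n → ℝ) :=
  {u | (∃ K, LipschitzWith K u) ∧ HasCompactSupport u ∧ tsupport u ⊆ Ω}

/-- Restricted centered maximal operator `M_R f(x) = sup_{0<r<R} ⨍_{B(x,r)} |f|`. -/
def maxOp {n : ℕ} (R : ℝ) (f : En n → ℝ) (x : En n) : ℝ :=
  ⨆ r : Ioo (0 : ℝ) R, ⨍ y in ball x (r : ℝ), |f y|

/-!
On the unit ball the infimal `φ`-capacity is controlled by the `p`-capacity. Testing with `t • v`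
and letting `t → 0` bounds it above by the `p`-capacity, because the `q`-part of the normalized
energy is of order `t ^ (q - p)`. Conversely, with `g = |∇(t⁻¹ u)|` the integrand normalized at
level `t` is at least `min (g ^ p) (g ^ q) ≥ ε ^ (q - p) * (g ^ p - ε ^ p)` for every `ε ≤ 1`, so
a lower bound on the `p`-capacity gives a positive lower bound that is uniform in the weight.
Rescaling `B(z, r)` to the unit ball changes both sides of the standard fatness condition by the
same factor. Hence either condition says that `E` is locally uniformly `p`-fat; the standard one
also needs `B̄(0, 1/2)` to have positive `p`-capacity, which follows from the Poincaré inequality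
in `L¹`.
-/

section Poincare

variable {V : Type*} [NormedAddCommGroup V] [NormedSpace ℝ V]

theorem exists_mem_segment_mem_frontier {s : Set V} {x y : V} (hx : x ∈ s) (hy : y ∉ s) :
    ∃ w ∈ segment ℝ x y, w ∈ frontier s := by
  have : PreconnectedSpace (segment ℝ x y) :=
    isPreconnected_iff_preconnectedSpace.1 (convex_segment x y).isPreconnected
  obtain ⟨w, hw⟩ := nonempty_frontier_iff.2
    ⟨⟨⟨x, left_mem_segment ℝ x y⟩, hx⟩, (ne_univ_iff_exists_notMem (Subtype.val ⁻¹' s)).2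
      ⟨⟨y, right_mem_segment ℝ x y⟩, hy⟩⟩
  exact ⟨w, w.2, continuous_subtype_val.frontier_preimage_subset s hw⟩

theorem norm_le_mul_dist_of_eq_zero_on_frontier {F : Type*} [NormedAddCommGroup F] {s : Set V}
    {f : V → F} {K : NNReal} (hf : LipschitzOnWith K f (closure s))
    (h0 : ∀ x ∈ frontier s, f x = 0) {x y : V} (hx : x ∈ s) (hy : y ∉ s) :
    ‖f x‖ ≤ K * dist x y := by
  obtain ⟨w, hw, hws⟩ := exists_mem_segment_mem_frontier hx hy
  calc ‖f x‖ = dist (f x) (f w) := by rw [h0 w hws, dist_zero_right]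
    _ ≤ K * dist x w := hf.dist_le_mul x (subset_closure hx) w (frontier_subset_closure hws)
    _ ≤ K * dist x y := by
        gcongr
        linarith [dist_add_dist_of_mem_segment hw, dist_nonneg (x := w) (y := y)]

theorem lipschitzWith_indicator_of_eq_zero_on_frontier {F : Type*} [NormedAddCommGroup F]
    {s : Set V} {f : V → F} {K : NNReal} (hf : LipschitzOnWith K f (closure s))
    (h0 : ∀ x ∈ frontier s, f x = 0) : LipschitzWith K (s.indicator f) := by
  refine LipschitzWith.of_dist_le_mul fun x y => ?_
  by_cases hx : x ∈ s <;> by_cases hy : y ∈ s <;> simp only [hx, hy, indicator_of_mem,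
    indicator_of_notMem, not_false_eq_true, dist_zero_left, dist_zero_right, dist_self]
  · exact hf.dist_le_mul x (subset_closure hx) y (subset_closure hy)
  · exact norm_le_mul_dist_of_eq_zero_on_frontier hf h0 hx hy
  · rw [dist_comm]
    exact norm_le_mul_dist_of_eq_zero_on_frontier hf h0 hy hx
  · positivity

theorem norm_fderiv_abs_le {f : V → ℝ} {x : V} (hf : ContinuousAt f x) :
    ‖fderiv ℝ (fun y => |f y|) x‖ ≤ ‖fderiv ℝ f x‖ := by
  rcases lt_trichotomy (f x) 0 with hneg | hzero | hpos
  · have : (fun y => |f y|) =ᶠ[nhds x] fun y => -f y :=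
      (hf.eventually (gt_mem_nhds hneg)).mono fun y hy => abs_of_neg hy
    rw [this.fderiv_eq, fderiv_fun_neg, norm_neg]
  · have : IsLocalMin (fun y => |f y|) x := .of_forall fun y => by simp [hzero]
    rw [this.fderiv_eq_zero, norm_zero]
    exact norm_nonneg _
  · have : (fun y => |f y|) =ᶠ[nhds x] f :=
      (hf.eventually (lt_mem_nhds hpos)).mono fun y hy => abs_of_pos hy
    rw [this.fderiv_eq]

theorem norm_fderiv_abs_indicator_le {O : Set V} (hO : IsOpen O) {f : V → ℝ}
    (hf : Continuous (O.indicator f)) (x : V) :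
    ‖fderiv ℝ (fun y => |O.indicator f y|) x‖ ≤ O.indicator (fun y => ‖fderiv ℝ f y‖) x := by
  by_cases hx : x ∈ O
  · have hev : O.indicator f =ᶠ[nhds x] f :=
      Filter.eventually_of_mem (hO.mem_nhds hx) fun y hy => indicator_of_mem hy f
    rw [indicator_of_mem hx, ← hev.fderiv_eq]
    exact norm_fderiv_abs_le hf.continuousAt
  · have hmin : IsLocalMin (fun y => |O.indicator f y|) x := .of_forall fun y => by
      simp only [indicator_of_notMem hx, abs_zero, abs_nonneg]
    simp [hmin.fderiv_eq_zero, hx]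

variable [MeasurableSpace V] [BorelSpace V] (μ : Measure V)

theorem integrable_norm_fderiv_of_hasCompactSupport [IsFiniteMeasureOnCompacts μ] {f : V → ℝ}
    {K : NNReal} (hf : LipschitzWith K f) (hfs : HasCompactSupport f) :
    Integrable (fun x => ‖fderiv ℝ f x‖) μ := by
  refine (integrableOn_iff_integrable_of_support_subset (s := tsupport f) fun x hx =>
    support_fderiv_subset ℝ (norm_ne_zero_iff.1 hx : fderiv ℝ f x ≠ 0)).1 ?_
  exact Measure.integrableOn_of_bounded hfs.measure_lt_top.ne
    (measurable_fderiv ℝ f).norm.aestronglyMeasurable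
    (.of_forall fun x => (norm_norm _).trans_le (norm_fderiv_le_of_lipschitz ℝ hf))

variable [FiniteDimensional ℝ V] [Nontrivial V] [μ.IsAddHaarMeasure] {R : ℝ}

/- For a unit vector `e` and a norming functional `G` with `G e = 1`, integrate `f = f ∂ₑG` by
parts; where `f` does not vanish, `|G| ≤ R`. -/
theorem integral_le_mul_integral_norm_fderiv {f : V → ℝ} {K : NNReal}
    (hf : LipschitzWith K f) (hf0 : ∀ x, 0 ≤ f x) (hfR : ∀ x ∉ ball (0 : V) R, f x = 0) :
    ∫ x, f x ∂μ ≤ R * ∫ x, ‖fderiv ℝ f x‖ ∂μ := by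
  obtain ⟨e, he⟩ := exists_norm_eq V zero_le_one
  obtain ⟨G, hG, hGe⟩ := exists_dual_vector' ℝ e
  have hfs : HasCompactSupport f := .intro (isCompact_closedBall (0 : V) R) fun x hx =>
    hfR x fun h => hx (ball_subset_closedBall h)
  have hlineG : ∀ x, lineDeriv ℝ G x e = 1 := fun x => by
    rw [G.differentiableAt.lineDeriv_eq_fderiv, G.fderiv, hGe, he]
    rfl
  have hparts : ∫ x, f x ∂μ = ∫ x, lineDeriv ℝ f x (-e) * G x ∂μ := by
    simpa only [hlineG, one_mul] using
      LipschitzWith.integral_lineDeriv_mul_eq (μ := μ) G.lipschitz hf hfs e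
  have hbound : ∀ᵐ x ∂μ, ‖lineDeriv ℝ f x (-e) * G x‖ ≤ R * ‖fderiv ℝ f x‖ := by
    filter_upwards [hf.ae_differentiableAt (μ := μ)] with x hx
    rw [hx.lineDeriv_eq_fderiv]
    by_cases hxR : x ∈ ball (0 : V) R
    · have hGx : ‖G x‖ ≤ R := (G.le_of_opNorm_le hG.le x).trans <| by
        simpa using (mem_ball_zero_iff.1 hxR).le
      have hfe : ‖fderiv ℝ f x (-e)‖ ≤ ‖fderiv ℝ f x‖ := by
        simpa [he] using (fderiv ℝ f x).le_opNorm (-e)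
      rw [norm_mul, mul_comm R]
      gcongr
    · have hmin : IsLocalMin f x := .of_forall fun y => by rw [hfR x hxR]; exact hf0 y
      simp [hmin.fderiv_eq_zero]
  calc ∫ x, f x ∂μ ≤ ‖∫ x, lineDeriv ℝ f x (-e) * G x ∂μ‖ := hparts ▸ Real.le_norm_self _
    _ ≤ ∫ x, R * ‖fderiv ℝ f x‖ ∂μ := norm_integral_le_of_norm_le
        ((integrable_norm_fderiv_of_hasCompactSupport μ hf hfs).const_mul R) hbound
    _ = R * ∫ x, ‖fderiv ℝ f x‖ ∂μ := integral_const_mul _ _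

theorem setIntegral_abs_le_mul_setIntegral_norm_fderiv {O : Set V} (hO : IsOpen O) (hR : 0 ≤ R)
    (hOR : O ⊆ ball 0 R) {f : V → ℝ} {K : NNReal} (hf : LipschitzOnWith K f (closure O))
    (h0 : ∀ x ∈ frontier O, f x = 0) :
    ∫ x in O, |f x| ∂μ ≤ R * ∫ x in O, ‖fderiv ℝ f x‖ ∂μ := by
  set F := O.indicator f
  have hF : LipschitzWith K F := lipschitzWith_indicator_of_eq_zero_on_frontier hf h0
  have habs : LipschitzWith (1 * K) fun x => |F x| := lipschitzWith_one_norm.comp hF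
  have hF0 : ∀ x ∉ O, |F x| = 0 := fun x hx => by simp [F, hx]
  have hint : IntegrableOn (fun x => ‖fderiv ℝ f x‖) O μ :=
    Measure.integrableOn_of_bounded (measure_ball_lt_top.trans_le' (measure_mono hOR)).ne
      (measurable_fderiv ℝ f).norm.aestronglyMeasurable <|
      (ae_restrict_iff' hO.measurableSet).2 <| .of_forall fun x hx => (norm_norm _).trans_le <|
        norm_fderiv_le_of_lipschitzOn ℝ (hO.mem_nhds hx) (hf.mono subset_closure)
  calc ∫ x in O, |f x| ∂μ = ∫ x, |F x| ∂μ := by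
        rw [← integral_indicator hO.measurableSet]
        congr with x
        by_cases hx : x ∈ O <;> simp [F, hx]
    _ ≤ R * ∫ x, ‖fderiv ℝ (fun y => |F y|) x‖ ∂μ :=
        integral_le_mul_integral_norm_fderiv μ habs (fun x => abs_nonneg _)
          fun x hx => hF0 x fun h => hx (hOR h)
    _ ≤ R * ∫ x in O, ‖fderiv ℝ f x‖ ∂μ := by
        rw [← integral_indicator hO.measurableSet]
        refine mul_le_mul_of_nonneg_left ?_ hR
        exact integral_mono_of_nonneg (.of_forall fun x => norm_nonneg _)
          (hint.integrable_indicator hO.measurableSet) (.of_forall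
            (norm_fderiv_abs_indicator_le hO hF.continuous))

end Poincare

theorem holderWith_of_dist_le_mul_rpow {X Y : Type*} [PseudoMetricSpace X] [PseudoMetricSpace Y]
    {f : X → Y} {C α : NNReal} (h : ∀ x y, dist (f x) (f y) ≤ C * dist x y ^ (α : ℝ)) :
    HolderWith C α f := fun x y => by
  rw [edist_nndist, edist_nndist, ← ENNReal.coe_rpow_of_nonneg _ α.coe_nonneg]
  exact_mod_cast h x y

section Rpow

theorem rpow_sub_mul_sub_le_rpow {s q ε g : ℝ} (hs : 0 ≤ s) (hsq : s ≤ q) (hε : 0 < ε)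
    (hg : 0 ≤ g) : ε ^ (q - s) * (g ^ s - ε ^ s) ≤ g ^ q := by
  rcases le_total ε g with h | h
  · have hg0 : 0 < g := hε.trans_le h
    calc ε ^ (q - s) * (g ^ s - ε ^ s) ≤ g ^ (q - s) * g ^ s := by
          gcongr
          · exact sub_nonneg.2 (Real.rpow_le_rpow hε.le h hs)
          · exact sub_le_self _ (by positivity)
      _ = g ^ q := by rw [← Real.rpow_add hg0, sub_add_cancel]
  · calc ε ^ (q - s) * (g ^ s - ε ^ s) ≤ 0 :=
          mul_nonpos_of_nonneg_of_nonpos (by positivity)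
            (sub_nonpos.2 (Real.rpow_le_rpow hg h hs))
      _ ≤ g ^ q := by positivity

theorem exists_rpow_mul_lt {s c : ℝ} (hs : 0 < s) (V : ℝ) (hc : 0 < c) :
    ∃ ε, 0 < ε ∧ ε ≤ 1 ∧ ε ^ s * V < c := by
  have hcont : Continuous fun ε : ℝ => ε ^ s * V :=
    (Real.continuous_rpow_const hs.le).mul continuous_const
  have hlim : ∀ᶠ ε in nhds (0 : ℝ), ε ^ s * V < c :=
    hcont.continuousAt.eventually (gt_mem_nhds (by simpa [hs.ne'] using hc))
  have hpos : ∀ᶠ ε in nhdsWithin (0 : ℝ) (Ioi 0), ε ∈ Ioc (0 : ℝ) 1 :=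
    Ioc_mem_nhdsGT one_pos
  obtain ⟨ε, hε, hlt⟩ := (hpos.and (hlim.filter_mono nhdsWithin_le_nhds)).exists
  exact ⟨ε, hε.1, hε.2, hlt⟩

end Rpow

section Admissible

variable {n : ℕ} {E O : Set (En n)} {u : En n → ℝ} {K : NNReal} {s t : ℝ}

theorem gnorm_nonneg (u : En n → ℝ) (x : En n) : 0 ≤ gnorm u x := norm_nonneg _

theorem measurable_gnorm (u : En n → ℝ) : Measurable (gnorm u) := (measurable_fderiv ℝ u).norm

theorem gnorm_const_smul (c : ℝ) (u : En n → ℝ) (x : En n) : gnorm (c • u) x = |c| * gnorm u x := by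
  rw [gnorm, fderiv_const_smul_field, Pi.smul_apply, norm_smul, Real.norm_eq_abs, gnorm]

theorem gnorm_comp_add_smul (u : En n → ℝ) (z : En n) (r : ℝ) (y : En n) :
    gnorm (fun y => u (z + r • y)) y = |r| * gnorm u (z + r • y) := by
  have h := fderiv_comp_smul (𝕜 := ℝ) (f := fun x => u (z + x)) (x := y) r
  rw [gnorm, h, fderiv_comp_add_left, norm_smul, Real.norm_eq_abs, gnorm]

theorem gnorm_le_of_lipschitzOnWith (hO : IsOpen O) (hu : LipschitzOnWith K u (closure O))
    {x : En n} (hx : x ∈ O) : gnorm u x ≤ K :=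
  norm_fderiv_le_of_lipschitzOn ℝ (hO.mem_nhds hx) (hu.mono subset_closure)

theorem integrableOn_mul_gnorm_rpow (hO : IsOpen O) {b : En n → ℝ} (hb : IntegrableOn b O)
    (hs : 0 ≤ s) (hu : u ∈ Adm E O t) : IntegrableOn (fun x => b x * gnorm u x ^ s) O := by
  obtain ⟨⟨K, hK⟩, -⟩ := hu
  refine Integrable.mul_bdd (c := (K : ℝ) ^ s) hb
    ((measurable_gnorm u).pow_const s).aestronglyMeasurable ?_
  refine (ae_restrict_iff' hO.measurableSet).2 (.of_forall fun x hx => ?_)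
  rw [Real.norm_of_nonneg (Real.rpow_nonneg (gnorm_nonneg u x) s)]
  exact Real.rpow_le_rpow (gnorm_nonneg u x) (gnorm_le_of_lipschitzOnWith hO hK hx) hs

theorem integrableOn_gnorm_rpow (hO : IsOpen O) (hOb : Bornology.IsBounded O) (hs : 0 ≤ s)
    (hu : u ∈ Adm E O t) : IntegrableOn (fun x => gnorm u x ^ s) O := by
  simpa only [one_mul] using
    integrableOn_mul_gnorm_rpow hO (b := fun _ => (1 : ℝ))
      (integrableOn_const hOb.measure_lt_top.ne) hs hu

theorem smul_mem_adm {c : ℝ} (hc : 0 ≤ c) (hu : u ∈ Adm E O t) : c • u ∈ Adm E O (c * t) := by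
  obtain ⟨⟨K, hK⟩, hE, h0⟩ := hu
  exact ⟨⟨_, (lipschitzWith_smul c).comp_lipschitzOnWith hK⟩,
    fun x hx => mul_le_mul_of_nonneg_left (hE x hx) hc, fun x hx => by simp [h0 x hx]⟩

theorem comp_mem_adm (e : En n ≃ᵈ En n) (hu : u ∈ Adm E O t) :
    u ∘ e ∈ Adm (e ⁻¹' E) (e ⁻¹' O) t := by
  obtain ⟨⟨K, hK⟩, hE, h0⟩ := hu
  refine ⟨⟨K * Dilation.ratio e, ?_⟩, fun x hx => hE _ hx, fun x hx => h0 _ ?_⟩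
  · rw [← e.coe_toHomeomorph, ← e.toHomeomorph.preimage_closure]
    exact hK.comp (Dilation.lipschitz e).lipschitzOnWith (mapsTo_preimage _ _)
  · rwa [← e.coe_toHomeomorph, ← e.toHomeomorph.preimage_frontier] at hx

theorem image_comp_adm (e : En n ≃ᵈ En n) :
    (fun u => u ∘ e) '' Adm E O t = Adm (e ⁻¹' E) (e ⁻¹' O) t := by
  refine (image_subset_iff.2 fun u => comp_mem_adm e).antisymm fun v hv => ⟨v ∘ e.symm, ?_, ?_⟩
  · simpa [preimage_preimage] using comp_mem_adm e.symm hv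
  · simp [Function.comp_def]

theorem adm_ball_nonempty {z : En n} {ρ R : ℝ} (hρR : ρ < R) (hR : R ≠ 0)
    (hE : E ⊆ closedBall z ρ) : (Adm E (ball z R) 1).Nonempty := by
  refine ⟨fun x => (R - ρ)⁻¹ • (R - dist x z), ⟨_, ((lipschitzWith_smul _).comp
    ((LipschitzWith.const R).sub (LipschitzWith.dist_left z))).lipschitzOnWith⟩,
    fun x hx => ?_, fun x hx => ?_⟩
  · have := mem_closedBall.1 (hE hx)
    simp only [smul_eq_mul]
    rw [inv_mul_eq_div, one_le_div (sub_pos.2 hρR)]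
    linarith
  · rw [frontier_ball z hR, mem_sphere] at hx
    simp [hx]

end Admissible

section PCapacity

variable {n : ℕ} {E O : Set (En n)} {p s R : ℝ}

theorem capP_le_setIntegral {u : En n → ℝ} (hu : u ∈ Adm E O 1) :
    capP s E O ≤ ∫ x in O, gnorm u x ^ s :=
  csInf_le ⟨0, forall_mem_image.2 fun v _ =>
    integral_nonneg fun x => Real.rpow_nonneg (gnorm_nonneg v x) s⟩ (mem_image_of_mem _ hu)

theorem mul_capP_sub_le_setIntegral (hO : IsOpen O) (hOb : Bornology.IsBounded O) (hs : 0 ≤ s)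
    {κ δ : ℝ} (hκ : 0 ≤ κ) {v F : En n → ℝ} (hv : v ∈ Adm E O 1) (hF : IntegrableOn F O)
    (h : ∀ x ∈ O, κ * (gnorm v x ^ s - δ) ≤ F x) :
    κ * (capP s E O - δ * volume.real O) ≤ ∫ x in O, F x := by
  have hv_int := integrableOn_gnorm_rpow hO hOb hs hv
  have hδ_int : IntegrableOn (fun _ => δ) O := integrableOn_const hOb.measure_lt_top.ne
  calc κ * (capP s E O - δ * volume.real O)
      ≤ κ * ((∫ x in O, gnorm v x ^ s) - δ * volume.real O) := by
        gcongr
        exact capP_le_setIntegral hv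
    _ = ∫ x in O, κ * (gnorm v x ^ s - δ) := by
        rw [integral_const_mul, integral_sub hv_int hδ_int, setIntegral_const, smul_eq_mul,
          mul_comm δ]
    _ ≤ ∫ x in O, F x := setIntegral_mono_on ((hv_int.sub hδ_int).const_mul κ) hF hO.measurableSet h

theorem measureReal_le_setIntegral_abs (hOb : Bornology.IsBounded O) (hEO : E ⊆ O)
    {u : En n → ℝ} (hu : u ∈ Adm E O 1) : volume.real E ≤ ∫ x in O, |u x| := by
  obtain ⟨⟨K, hK⟩, hE, -⟩ := hu
  have : IsFiniteMeasure (volume.restrict O) := isFiniteMeasure_restrict.2 hOb.measure_lt_top.ne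
  have hu_int : IntegrableOn (fun x => |u x|) O :=
    (hK.continuousOn.abs.integrableOn_compact hOb.isCompact_closure).mono_set subset_closure
  calc volume.real E ≤ (volume.restrict O).real E := by
        refine ENNReal.toReal_mono (measure_ne_top _ _) ?_
        simpa only [inter_eq_left.2 hEO] using Measure.le_restrict_apply O E (μ := volume)
    _ ≤ (volume.restrict O).real {x | 1 ≤ |u x|} :=
        measureReal_mono fun x hx => (hE x hx).trans (le_abs_self _)
    _ ≤ ∫ x in O, |u x| := by
        simpa only [one_mul] using
          mul_meas_ge_le_integral_of_nonneg (.of_forall fun x => abs_nonneg (u x)) hu_int 1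

theorem measureReal_div_le_capP_one (hn : 0 < n) (hO : IsOpen O) (hR : 0 < R)
    (hOR : O ⊆ ball 0 R) (hEO : E ⊆ O) (hne : (Adm E O 1).Nonempty) :
    volume.real E / R ≤ capP 1 E O := by
  have : Nonempty (Fin n) := ⟨⟨0, hn⟩⟩
  refine le_csInf (hne.image _) (forall_mem_image.2 fun u hu => ?_)
  obtain ⟨K, hK⟩ := hu.1
  rw [div_le_iff₀' hR]
  calc volume.real E ≤ ∫ x in O, |u x| :=
        measureReal_le_setIntegral_abs (isBounded_ball.subset hOR) hEO hu
    _ ≤ R * ∫ x in O, gnorm u x ^ (1 : ℝ) := by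
        simpa only [Real.rpow_one, gnorm] using
          setIntegral_abs_le_mul_setIntegral_norm_fderiv volume hO hR.le hOR hK hu.2.2

theorem capP_pos (hn : 0 < n) (hp : 1 ≤ p) (hO : IsOpen O) (hOb : Bornology.IsBounded O)
    (hEO : E ⊆ O) (hE : 0 < volume.real E) (hne : (Adm E O 1).Nonempty) : 0 < capP p E O := by
  obtain ⟨R, hR, hOR⟩ := hOb.subset_ball_lt 0 0
  have hcap : 0 < capP 1 E O :=
    (div_pos hE hR).trans_le (measureReal_div_le_capP_one hn hO hR hOR hEO hne)
  obtain ⟨ε, hε, -, hlt⟩ := exists_rpow_mul_lt one_pos (volume.real O) hcap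
  refine (mul_pos (Real.rpow_pos_of_pos hε (p - 1)) (sub_pos.2 hlt)).trans_le ?_
  exact le_csInf (hne.image _) (forall_mem_image.2 fun u hu =>
    mul_capP_sub_le_setIntegral hO hOb zero_le_one (by positivity) hu
      (integrableOn_gnorm_rpow hO hOb (zero_le_one.trans hp) hu) fun x _ =>
        rpow_sub_mul_sub_le_rpow zero_le_one hp hε (gnorm_nonneg u x))

end PCapacity

section InfimalCapacity

variable {n : ℕ} {ψ : En n → ℝ → ℝ} {ψm : ℝ → ℝ} {E O : Set (En n)}

theorem capInfGen_le_setIntegral (hψ : ∀ x s, 0 ≤ s → 0 ≤ ψ x s) (hψm : ∀ s, 0 ≤ s → 0 ≤ ψm s)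
    {t : ℝ} (ht : 0 < t) {u : En n → ℝ} (hu : u ∈ Adm E O t) :
    capInfGen ψ ψm E O ≤ ∫ x in O, ψ x (gnorm u x) / ψm t := by
  have henergy (s : ℝ) (hs : 0 ≤ s) : 0 ∈ lowerBounds
      ((fun v => ∫ x in O, ψ x (gnorm v x) / ψm s) '' Adm E O s) :=
    forall_mem_image.2 fun v _ => integral_nonneg fun x =>
      div_nonneg (hψ x _ (gnorm_nonneg v x)) (hψm s hs)
  calc capInfGen ψ ψm E O ≤ capLevel ψ ψm E O t :=
        ciInf_le ⟨0, forall_mem_range.2 fun s : Ioi (0 : ℝ) =>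
          Real.sInf_nonneg (henergy s s.2.le)⟩ (⟨t, ht⟩ : Ioi (0 : ℝ))
    _ ≤ ∫ x in O, ψ x (gnorm u x) / ψm t := csInf_le ⟨0, henergy t ht.le⟩ (mem_image_of_mem _ hu)

theorem le_capInfGen (hne : (Adm E O 1).Nonempty) {c : ℝ}
    (h : ∀ t > 0, ∀ u ∈ Adm E O t, c ≤ ∫ x in O, ψ x (gnorm u x) / ψm t) :
    c ≤ capInfGen ψ ψm E O := by
  obtain ⟨v, hv⟩ := hne
  have : Nonempty (Ioi (0 : ℝ)) := ⟨1, mem_Ioi.2 one_pos⟩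
  refine le_ciInf fun t => le_csInf (.image _ ⟨t.1 • v, ?_⟩) (forall_mem_image.2 (h t t.2))
  simpa only [mul_one] using smul_mem_adm t.2.le hv

end InfimalCapacity

section DoublePhase

variable {n : ℕ} {a b : En n → ℝ} {p q t g : ℝ} {E O : Set (En n)} {x : En n}

theorem aInfOn_nonneg (ha : ∀ x, 0 ≤ a x) (O : Set (En n)) : 0 ≤ aInfOn a O :=
  Real.sInf_nonneg (forall_mem_image.2 fun x _ => ha x)

theorem aInfOn_le (ha : ∀ x, 0 ≤ a x) (hx : x ∈ O) : aInfOn a O ≤ a x :=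
  csInf_le ⟨0, forall_mem_image.2 fun y _ => ha y⟩ (mem_image_of_mem a hx)

theorem phi_nonneg (hb : ∀ x, 0 ≤ b x) (x : En n) (ht : 0 ≤ t) : 0 ≤ phi b p q x t :=
  add_nonneg (Real.rpow_nonneg ht p) (mul_nonneg (hb x) (Real.rpow_nonneg ht q))

theorem rpow_le_phiMinus (ha : ∀ x, 0 ≤ a x) (O : Set (En n)) (ht : 0 ≤ t) :
    t ^ p ≤ phiMinus a p q O t :=
  le_add_of_nonneg_right (mul_nonneg (aInfOn_nonneg ha O) (Real.rpow_nonneg ht q))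

theorem phiMinus_nonneg (ha : ∀ x, 0 ≤ a x) (O : Set (En n)) (ht : 0 ≤ t) :
    0 ≤ phiMinus a p q O t :=
  (Real.rpow_nonneg ht p).trans (rpow_le_phiMinus ha O ht)

theorem integrableOn_phi_gnorm (hO : IsOpen O) (hOb : Bornology.IsBounded O)
    (hb : IntegrableOn b O) (hp : 0 ≤ p) (hq : 0 ≤ q) {u : En n → ℝ} (hu : u ∈ Adm E O t) :
    IntegrableOn (fun x => phi b p q x (gnorm u x)) O :=
  (integrableOn_gnorm_rpow hO hOb hp hu).add (integrableOn_mul_gnorm_rpow hO hb hq hu)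

theorem phi_mul_div_phiMinus_le (ha : ∀ x, 0 ≤ a x) (hb : ∀ x, 0 ≤ b x) (ht : 0 < t)
    (hg : 0 ≤ g) :
    phi b p q x (t * g) / phiMinus a p q O t ≤ g ^ p + t ^ (q - p) * (b x * g ^ q) :=
  calc phi b p q x (t * g) / phiMinus a p q O t ≤ phi b p q x (t * g) / t ^ p :=
        div_le_div_of_nonneg_left (phi_nonneg hb x (by positivity)) (by positivity)
          (rpow_le_phiMinus ha O ht.le)
    _ = g ^ p + t ^ (q - p) * (b x * g ^ q) := by
        rw [phi, Real.mul_rpow ht.le hg, Real.mul_rpow ht.le hg, Real.rpow_sub ht]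
        field_simp

theorem rpow_sub_mul_sub_le_phi_mul_div_phiMinus (hp : 0 ≤ p) (hpq : p ≤ q) (ha : ∀ x, 0 ≤ a x)
    (hab : a x ≤ b x) (hx : x ∈ O) (ht : 0 < t) (hg : 0 ≤ g) {ε : ℝ} (hε : 0 < ε) (hε1 : ε ≤ 1) :
    ε ^ (q - p) * (g ^ p - ε ^ p) ≤ phi b p q x (t * g) / phiMinus a p q O t := by
  have hinf := aInfOn_nonneg ha O
  have hinf_le : aInfOn a O ≤ b x := (aInfOn_le ha hx).trans hab
  have hle_p : ε ^ (q - p) * (g ^ p - ε ^ p) ≤ g ^ p :=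
    calc ε ^ (q - p) * (g ^ p - ε ^ p) ≤ ε ^ (q - p) * g ^ p := by
          gcongr
          exact sub_le_self _ (by positivity)
      _ ≤ g ^ p := mul_le_of_le_one_left (by positivity)
          (Real.rpow_le_one hε.le hε1 (sub_nonneg.2 hpq))
  have hle_q := rpow_sub_mul_sub_le_rpow hp hpq hε hg
  rw [le_div_iff₀ ((Real.rpow_pos_of_pos ht p).trans_le (rpow_le_phiMinus ha O ht.le)), phi,
    phiMinus, Real.mul_rpow ht.le hg, Real.mul_rpow ht.le hg]
  calc ε ^ (q - p) * (g ^ p - ε ^ p) * (t ^ p + aInfOn a O * t ^ q)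
      = t ^ p * (ε ^ (q - p) * (g ^ p - ε ^ p))
        + aInfOn a O * (t ^ q * (ε ^ (q - p) * (g ^ p - ε ^ p))) := by ring
    _ ≤ t ^ p * g ^ p + aInfOn a O * (t ^ q * g ^ q) := by gcongr
    _ ≤ t ^ p * g ^ p + b x * (t ^ q * g ^ q) := by gcongr

theorem capInfGen_phi_le_capP (hp : 0 ≤ p) (hpq : p < q) (ha : ∀ x, 0 ≤ a x)
    (hb : ∀ x, 0 ≤ b x) (hO : IsOpen O) (hOb : Bornology.IsBounded O) (hb_int : IntegrableOn b O)
    (hne : (Adm E O 1).Nonempty) :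
    capInfGen (phi b p q) (phiMinus a p q O) E O ≤ capP p E O := by
  refine le_csInf (hne.image _) (forall_mem_image.2 fun v hv => ?_)
  have hq : 0 ≤ q := hp.trans hpq.le
  have hp_int := integrableOn_gnorm_rpow hO hOb hp hv
  have hq_int := integrableOn_mul_gnorm_rpow hO hb_int hq hv
  refine le_of_forall_pos_le_add fun δ hδ => ?_
  obtain ⟨t, ht, -, htδ⟩ := exists_rpow_mul_lt (sub_pos.2 hpq)
    (∫ x in O, b x * gnorm v x ^ q) hδ
  have htv : t • v ∈ Adm E O t := by simpa only [mul_one] using smul_mem_adm ht.le hv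
  calc capInfGen (phi b p q) (phiMinus a p q O) E O
      ≤ ∫ x in O, phi b p q x (gnorm (t • v) x) / phiMinus a p q O t :=
        capInfGen_le_setIntegral (fun x _ => phi_nonneg hb x) (fun _ => phiMinus_nonneg ha O) ht htv
    _ ≤ ∫ x in O, (gnorm v x ^ p + t ^ (q - p) * (b x * gnorm v x ^ q)) := by
        refine integral_mono ((integrableOn_phi_gnorm hO hOb hb_int hp hq htv).div_const _)
          (hp_int.add (hq_int.const_mul _)) fun x => ?_
        simpa only [gnorm_const_smul, abs_of_pos ht] using
          phi_mul_div_phiMinus_le ha hb ht (gnorm_nonneg v x)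
    _ = (∫ x in O, gnorm v x ^ p) + t ^ (q - p) * ∫ x in O, b x * gnorm v x ^ q := by
        rw [integral_add hp_int (hq_int.const_mul _), integral_const_mul]
    _ ≤ (∫ x in O, gnorm v x ^ p) + δ := by gcongr

theorem rpow_sub_mul_capP_sub_le_capInfGen_phi (hp : 0 ≤ p) (hpq : p ≤ q) (ha : ∀ x, 0 ≤ a x)
    (hab : ∀ x, a x ≤ b x) (hO : IsOpen O) (hOb : Bornology.IsBounded O)
    (hb_int : IntegrableOn b O) (hne : (Adm E O 1).Nonempty) {ε : ℝ} (hε : 0 < ε) (hε1 : ε ≤ 1) :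
    ε ^ (q - p) * (capP p E O - ε ^ p * volume.real O) ≤
      capInfGen (phi b p q) (phiMinus a p q O) E O := by
  refine le_capInfGen hne fun t ht u hu => ?_
  have hv : t⁻¹ • u ∈ Adm E O 1 := by
    simpa only [inv_mul_cancel₀ ht.ne'] using smul_mem_adm (inv_nonneg.2 ht.le) hu
  refine mul_capP_sub_le_setIntegral hO hOb hp (by positivity) hv
    ((integrableOn_phi_gnorm hO hOb hb_int hp (hp.trans hpq) hu).div_const _) fun x hx => ?_
  have hgu : gnorm u x = t * gnorm (t⁻¹ • u) x := by
    rw [gnorm_const_smul, abs_inv, abs_of_pos ht, mul_inv_cancel_left₀ ht.ne']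
  rw [hgu]
  exact rpow_sub_mul_sub_le_phi_mul_div_phiMinus hp hpq ha (hab x) hx ht (gnorm_nonneg _ x) hε hε1

theorem exists_pos_le_capInfGen_phi (hp : 0 < p) (hpq : p ≤ q) (hO : IsOpen O)
    (hOb : Bornology.IsBounded O) {c : ℝ} (hc : 0 < c) :
    ∃ m > 0, ∀ (a b : En n → ℝ) (E : Set (En n)), (∀ x, 0 ≤ a x) → (∀ x, a x ≤ b x) →
      IntegrableOn b O → (Adm E O 1).Nonempty → c ≤ capP p E O →
      m ≤ capInfGen (phi b p q) (phiMinus a p q O) E O := by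
  obtain ⟨ε, hε, hε1, hlt⟩ := exists_rpow_mul_lt hp (volume.real O) hc
  refine ⟨ε ^ (q - p) * (c - ε ^ p * volume.real O),
    mul_pos (Real.rpow_pos_of_pos hε _) (sub_pos.2 hlt), fun a b E ha hab hb hne hcE => ?_⟩
  refine le_trans ?_
    (rpow_sub_mul_capP_sub_le_capInfGen_phi hp.le hpq ha hab hO hOb hb hne hε hε1)
  gcongr

end DoublePhase

section Rescaling

variable {n : ℕ} {a : En n → ℝ} {p q r : ℝ} {E O : Set (En n)}

theorem image_comp_add_smul_adm (hr : r ≠ 0) (z : En n) (E O : Set (En n)) (t : ℝ) :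
    (fun (u : En n → ℝ) y => u (z + r • y)) '' Adm E O t =
      Adm ((fun y => z + r • y) ⁻¹' E) ((fun y => z + r • y) ⁻¹' O) t := by
  have he : ⇑(DilationEquiv.smulTorsor z hr) = fun y : En n => z + r • y :=
    funext fun y => add_comm _ _
  simpa only [he, Function.comp_def] using
    image_comp_adm (E := E) (O := O) (t := t) (DilationEquiv.smulTorsor z hr)

theorem setIntegral_eq_mul_setIntegral_comp_add_smul (hr : 0 < r) (hO : MeasurableSet O)
    (z : En n) (f : En n → ℝ) :
    ∫ x in O, f x = r ^ n * ∫ y in (fun y => z + r • y) ⁻¹' O, f (z + r • y) := by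
  have hO' : MeasurableSet ((fun y : En n => z + r • y) ⁻¹' O) :=
    hO.preimage (by fun_prop)
  calc ∫ x in O, f x = ∫ x, O.indicator f (z + x) := by
        rw [integral_add_left_eq_self, integral_indicator hO]
    _ = r ^ n * ∫ y, O.indicator f (z + r • y) := by
        rw [Measure.integral_comp_smul_of_nonneg _ (fun x => O.indicator f (z + x)) r (hR := hr.le),
          finrank_euclideanSpace_fin, smul_eq_mul, mul_inv_cancel_left₀ (by positivity)]
    _ = r ^ n * ∫ y in (fun y => z + r • y) ⁻¹' O, f (z + r • y) := by
        rw [← integral_indicator hO']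
        rfl

theorem integrableOn_comp_add_smul (hr : r ≠ 0) (hO : MeasurableSet O) (z : En n)
    {f : En n → ℝ} (hf : IntegrableOn f O) :
    IntegrableOn (fun y => f (z + r • y)) ((fun y => z + r • y) ⁻¹' O) := by
  rw [← integrable_indicator_iff (hO.preimage (by fun_prop))]
  exact ((hf.integrable_indicator hO).comp_add_left z).comp_smul hr

theorem aInfOn_comp_add_smul (hr : r ≠ 0) (z : En n) (a : En n → ℝ) (O : Set (En n)) :
    aInfOn (fun y => a (z + r • y)) ((fun y => z + r • y) ⁻¹' O) = aInfOn a O := by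
  have hsurj : Function.Surjective fun y : En n => z + r • y := fun x =>
    ⟨r⁻¹ • (x - z), by simp [hr]⟩
  rw [aInfOn, ← image_image a, image_preimage_eq O hsurj, aInfOn]

theorem phi_eq_inv_mul_phi_mul (hr : 0 < r) {g : ℝ} (hg : 0 ≤ g) (z y : En n) :
    phi a p q (z + r • y) g =
      (r ^ p)⁻¹ * phi (fun y => r ^ (p - q) * a (z + r • y)) p q y (r * g) := by
  simp only [phi, Real.mul_rpow hr.le hg, Real.rpow_sub hr]
  field_simp

theorem capPhiLevel_eq_mul_capLevel_comp_add_smul (hr : 0 < r) (z : En n)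
    (hO : MeasurableSet O) (t : ℝ) :
    capPhiLevel a p q t E O =
      r ^ n / r ^ p * capLevel (phi (fun y => r ^ (p - q) * a (z + r • y)) p q)
        (phiMinus (fun y => a (z + r • y)) p q ((fun y => z + r • y) ⁻¹' O))
        ((fun y => z + r • y) ⁻¹' E) ((fun y => z + r • y) ⁻¹' O) t := by
  rw [capPhiLevel, capLevel, capLevel, ← smul_eq_mul, ← Real.sInf_smul_of_nonneg (by positivity),
    ← image_smul, ← image_comp_add_smul_adm hr.ne', image_image, image_image]
  refine congrArg sInf (image_congr fun u _ => ?_)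
  rw [setIntegral_eq_mul_setIntegral_comp_add_smul hr hO z, smul_eq_mul, div_mul_eq_mul_div,
    mul_div_assoc, ← integral_div]
  simp only [phiMinus, aInfOn_comp_add_smul hr.ne', gnorm_comp_add_smul, abs_of_pos hr,
    phi_eq_inv_mul_phi_mul hr (gnorm_nonneg _ _)]
  congr with y
  ring

theorem capPhiInf_eq_mul_capInfGen_comp_add_smul (hr : 0 < r) (z : En n)
    (hO : MeasurableSet O) :
    capPhiInf a p q E O =
      r ^ n / r ^ p * capInfGen (phi (fun y => r ^ (p - q) * a (z + r • y)) p q)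
        (phiMinus (fun y => a (z + r • y)) p q ((fun y => z + r • y) ⁻¹' O))
        ((fun y => z + r • y) ⁻¹' E) ((fun y => z + r • y) ⁻¹' O) := by
  simp only [capPhiInf, capInfGen, Real.mul_iInf_of_nonneg (show 0 ≤ r ^ n / r ^ p by positivity),
    capPhiLevel_eq_mul_capLevel_comp_add_smul hr z hO]

end Rescaling

section Fatness

variable {n : ℕ} {a : En n → ℝ} {p q c r ro : ℝ} {E : Set (En n)} {z : En n}

theorem shiftedSet_subset_closedBall (E : Set (En n)) (z : En n) (r : ℝ) :
    shiftedSet E z r ⊆ closedBall 0 (1 / 2) := sep_subset _ _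

theorem shiftedSet_univ (z : En n) (r : ℝ) : shiftedSet univ z r = closedBall 0 (1 / 2) := by
  ext
  simp [shiftedSet]

theorem preimage_add_smul_ball (hr : 0 < r) (z : En n) :
    (fun y => z + r • y) ⁻¹' ball z r = ball 0 1 := by
  ext y
  simp [norm_smul, abs_of_pos hr, hr]

theorem preimage_add_smul_inter_closedBall (hr : 0 < r) (E : Set (En n)) (z : En n) :
    (fun y => z + r • y) ⁻¹' (E ∩ closedBall z (r / 2)) = shiftedSet E z r := by
  ext y
  have hball : r * ‖y‖ ≤ r / 2 ↔ ‖y‖ ≤ 1 / 2 := by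
    rw [div_eq_mul_one_div, mul_le_mul_iff_right₀ hr]
  simp only [shiftedSet, mem_preimage, mem_inter_iff, mem_ofPred_eq, mem_closedBall_iff_norm,
    add_sub_cancel_left, sub_zero, norm_smul, Real.norm_of_nonneg hr.le, hball, and_comm]

theorem adm_shiftedSet_nonempty (E : Set (En n)) (z : En n) (r : ℝ) :
    (Adm (shiftedSet E z r) (ball 0 1) 1).Nonempty :=
  adm_ball_nonempty one_half_lt_one one_ne_zero (shiftedSet_subset_closedBall E z r)

theorem capP_closedBall_half_pos (hn : 0 < n) (hp : 1 ≤ p) :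
    0 < capP p (closedBall (0 : En n) (1 / 2)) (ball 0 1) :=
  capP_pos hn hp isOpen_ball isBounded_ball (closedBall_subset_ball one_half_lt_one)
    (ENNReal.toReal_pos (measure_closedBall_pos _ _ one_half_pos).ne'
      measure_closedBall_lt_top.ne)
    (adm_ball_nonempty one_half_lt_one one_ne_zero subset_rfl)

theorem integrableOn_comp_add_smul_ball_one (ha_int : LocallyIntegrable a volume) (hr : 0 < r)
    (z : En n) : IntegrableOn (fun y => a (z + r • y)) (ball 0 1) := by
  rw [← preimage_add_smul_ball hr z]
  exact integrableOn_comp_add_smul hr.ne' measurableSet_ball z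
    ((ha_int.integrableOn_isCompact (isCompact_closedBall z r)).mono_set ball_subset_closedBall)

theorem exists_locUnifPhiFat_iff_exists_locUnifPFat (hp : 0 < p) (hpq : p < q)
    (ha : ∀ x, 0 ≤ a x) (ha_int : LocallyIntegrable a volume) :
    (∃ c > 0, LocUnifPhiFat a p q E c ro) ↔ ∃ c > 0, LocUnifPFat p E c ro := by
  constructor
  · rintro ⟨c, hc, hfat⟩
    refine ⟨c, hc, fun z hz r hr hro => (hfat z hz r hr hro).trans ?_⟩
    exact capInfGen_phi_le_capP hp.le hpq (fun _ => ha _) (fun _ => ha _) isOpen_ball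
      isBounded_ball (integrableOn_comp_add_smul_ball_one ha_int hr z)
      (adm_shiftedSet_nonempty E z r)
  · rintro ⟨c, hc, hfat⟩
    obtain ⟨m, hm, hle⟩ := exists_pos_le_capInfGen_phi (n := n) hp hpq.le isOpen_ball
      isBounded_ball hc
    exact ⟨m, hm, fun z hz r hr hro => hle _ _ _ (fun _ => ha _) (fun _ => le_rfl)
      (integrableOn_comp_add_smul_ball_one ha_int hr z) (adm_shiftedSet_nonempty E z r)
      (hfat z hz r hr hro)⟩

/-- Local uniform `φ`-fatness in the standard form, which compares the capacities of
`E ∩ B̄(z, r/2)` and `B̄(z, r/2)` in `B(z, r)`. -/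
def LocUnifRelPhiFat (a : En n → ℝ) (p q : ℝ) (E : Set (En n)) (c ro : ℝ) : Prop :=
  ∀ z ∈ E, ∀ r : ℝ, 0 < r → r < ro →
    c * capPhiInf a p q (closedBall z (r / 2)) (ball z r) ≤
      capPhiInf a p q (E ∩ closedBall z (r / 2)) (ball z r)

/-- The capacity on the unit ball into which that of `E ∩ B̄(z, r/2)` in `B(z, r)` turns under
`y ↦ z + r y`, up to the factor `r ^ n / r ^ p`. The scaling of the gradient puts the factor
`r ^ (p - q)` on the weight of the integrand, but not on that of the normalization. -/
def rescaledCap (a : En n → ℝ) (p q : ℝ) (E : Set (En n)) (z : En n) (r : ℝ) : ℝ :=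
  capInfGen (phi (fun y => r ^ (p - q) * a (z + r • y)) p q)
    (phiMinus (fun y => a (z + r • y)) p q (ball 0 1)) (shiftedSet E z r) (ball 0 1)

theorem capPhiInf_inter_closedBall (hr : 0 < r) :
    capPhiInf a p q (E ∩ closedBall z (r / 2)) (ball z r) =
      r ^ n / r ^ p * rescaledCap a p q E z r := by
  rw [capPhiInf_eq_mul_capInfGen_comp_add_smul hr z measurableSet_ball,
    preimage_add_smul_ball hr, preimage_add_smul_inter_closedBall hr, rescaledCap]

theorem locUnifRelPhiFat_iff_rescaledCap :
    LocUnifRelPhiFat a p q E c ro ↔ ∀ z ∈ E, ∀ r, 0 < r → r < ro →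
      c * rescaledCap a p q univ z r ≤ rescaledCap a p q E z r := by
  refine forall₂_congr fun z _ => forall₂_congr fun r hr => imp_congr_right fun _ => ?_
  rw [← univ_inter (closedBall z (r / 2)), ← inter_assoc, inter_univ,
    capPhiInf_inter_closedBall hr, capPhiInf_inter_closedBall hr, mul_left_comm,
    mul_le_mul_iff_right₀ (div_pos (pow_pos hr n) (Real.rpow_pos_of_pos hr p))]

theorem rescaledCap_le_capP (hp : 0 ≤ p) (hpq : p < q) (ha : ∀ x, 0 ≤ a x)
    (ha_int : LocallyIntegrable a volume) (hr : 0 < r) (E : Set (En n)) (z : En n) :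
    rescaledCap a p q E z r ≤ capP p (shiftedSet E z r) (ball 0 1) :=
  capInfGen_phi_le_capP hp hpq (fun _ => ha _)
    (fun _ => mul_nonneg (Real.rpow_nonneg hr.le _) (ha _)) isOpen_ball isBounded_ball
    ((integrableOn_comp_add_smul_ball_one ha_int hr z).const_mul _) (adm_shiftedSet_nonempty E z r)

theorem exists_pos_le_rescaledCap (hp : 0 < p) (hpq : p ≤ q) (ha : ∀ x, 0 ≤ a x)
    (ha_int : LocallyIntegrable a volume) (hc : 0 < c) :
    ∃ m > 0, ∀ (E : Set (En n)) (z : En n) (r : ℝ), 0 < r → r ≤ 1 →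
      c ≤ capP p (shiftedSet E z r) (ball 0 1) → m ≤ rescaledCap a p q E z r := by
  obtain ⟨m, hm, hle⟩ := exists_pos_le_capInfGen_phi (n := n) hp hpq isOpen_ball isBounded_ball hc
  refine ⟨m, hm, fun E z r hr hr1 => hle _ _ _ (fun _ => ha _) (fun _ => ?_)
    ((integrableOn_comp_add_smul_ball_one ha_int hr z).const_mul _) (adm_shiftedSet_nonempty E z r)⟩
  exact le_mul_of_one_le_left (ha _)
    (Real.one_le_rpow_of_pos_of_le_one_of_nonpos hr hr1 (sub_nonpos.2 hpq))

theorem exists_locUnifRelPhiFat_iff_exists_locUnifPFat (hn : 0 < n) (hp : 1 ≤ p) (hpq : p < q)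
    (ha : ∀ x, 0 ≤ a x) (ha_int : LocallyIntegrable a volume) (hro : ro ≤ 1) :
    (∃ c > 0, LocUnifRelPhiFat a p q E c ro) ↔ ∃ c > 0, LocUnifPFat p E c ro := by
  have hp0 : 0 < p := one_pos.trans_le hp
  have hball := capP_closedBall_half_pos hn hp
  set P := capP p (closedBall (0 : En n) (1 / 2)) (ball 0 1)
  simp only [locUnifRelPhiFat_iff_rescaledCap]
  constructor
  · rintro ⟨c, hc, hfat⟩
    obtain ⟨m, hm, hle⟩ := exists_pos_le_rescaledCap hp0 hpq.le ha ha_int hball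
    refine ⟨c * m, mul_pos hc hm, fun z hz r hr hrr => ?_⟩
    calc c * m ≤ c * rescaledCap a p q univ z r := by
          gcongr
          exact hle univ z r hr (hrr.le.trans hro) (by rw [shiftedSet_univ])
      _ ≤ rescaledCap a p q E z r := hfat z hz r hr hrr
      _ ≤ capP p (shiftedSet E z r) (ball 0 1) := rescaledCap_le_capP hp0.le hpq ha ha_int hr E z
  · rintro ⟨c, hc, hfat⟩
    obtain ⟨m, hm, hle⟩ := exists_pos_le_rescaledCap hp0 hpq.le ha ha_int hc
    refine ⟨m / P, div_pos hm hball, fun z hz r hr hrr => ?_⟩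
    calc m / P * rescaledCap a p q univ z r ≤ m / P * P := by
          gcongr
          simpa only [shiftedSet_univ] using rescaledCap_le_capP hp0.le hpq ha ha_int hr univ z
      _ = m := div_mul_cancel₀ m hball.ne'
      _ ≤ rescaledCap a p q E z r := hle E z r hr (hrr.le.trans hro) (hfat z hz r hr hrr)

end Fatness

theorem fatness_formulations_equiv_general
    (n : ℕ) (hn : 0 < n) (p q : ℝ) (a : En n → ℝ) (hp : 1 ≤ p) (hpq : p < q)
    (ha : ∀ x, 0 ≤ a x) (ha_int : LocallyIntegrable a volume) (E : Set (En n)) :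
    (∃ cfat ro : ℝ, 0 < cfat ∧ 0 < ro ∧ ro ≤ 1 ∧ LocUnifPhiFat a p q E cfat ro) ↔
    (∃ cfat ro : ℝ, 0 < cfat ∧ 0 < ro ∧ ro ≤ 1 ∧ LocUnifRelPhiFat a p q E cfat ro) := by
  have hequiv (ro : ℝ) (hro : ro ≤ 1) :
      (∃ c > 0, LocUnifPhiFat a p q E c ro) ↔ ∃ c > 0, LocUnifRelPhiFat a p q E c ro :=
    (exists_locUnifPhiFat_iff_exists_locUnifPFat (one_pos.trans_le hp) hpq ha ha_int).trans
      (exists_locUnifRelPhiFat_iff_exists_locUnifPFat hn hp hpq ha ha_int hro).symm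
  constructor <;> rintro ⟨c, ro, hc, hro, hro1, hfat⟩
  · obtain ⟨c', hc', hfat'⟩ := (hequiv ro hro1).1 ⟨c, hc, hfat⟩
    exact ⟨c', ro, hc', hro, hro1, hfat'⟩
  · obtain ⟨c', hc', hfat'⟩ := (hequiv ro hro1).2 ⟨c, hc, hfat⟩
    exact ⟨c', ro, hc', hro, hro1, hfat'⟩

/-- **Equivalence of the two formulations of infimal `φ`-fatness** (Remark 2.4):
the rescaled condition (Definition 1.2) is equivalent to the standard
fatness condition comparing capacities of concentric balls. -/
theorem fatness_formulations_equiv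
    (n : ℕ) (hn : 0 < n) (p q α A : ℝ) (a : En n → ℝ)
    (hp : 1 < p) (hpq : p < q) (hα : 0 < α) (hα1 : α ≤ 1)
    (ha : ∀ x, 0 ≤ a x) (hA : 0 ≤ A)
    (haH : ∀ x y, |a x - a y| ≤ A * dist x y ^ α)
    (E : Set (En n)) (hE : IsCompact E) :
    (∃ cfat ro : ℝ, 0 < cfat ∧ 0 < ro ∧ ro ≤ 1 ∧ LocUnifPhiFat a p q E cfat ro) ↔
    (∃ cfat ro : ℝ, 0 < cfat ∧ 0 < ro ∧ ro ≤ 1 ∧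
      ∀ z ∈ E, ∀ r : ℝ, 0 < r → r < ro →
        cfat * capPhiInf a p q (closedBall z (r / 2)) (ball z r) ≤
          capPhiInf a p q (E ∩ closedBall z (r / 2)) (ball z r)) := by
  have ha_holder : HolderWith ⟨A, hA⟩ ⟨α, hα.le⟩ a := holderWith_of_dist_le_mul_rpow haH
  exact fatness_formulations_equiv_general n hn p q a hp.le hpq ha
    (ha_holder.continuous hα).locallyIntegrable E
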